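/- Let k ≥ 1 and δ ≥ 1 be integers, and let G be a simple graph of order n ≥ 8δ + 6k + 7 with minimum degree δ(G) ≥ δ and e(G) > (1/2)(n − k − δ − 1)(n − k − δ − 2) + (δ + k + 1)(δ + 1). If the (n−k)-closure G′ = cl_{n−k}(G) is not k-path-coverable, then the clique number of G′ equals n − δ − k. -/

import Mathlib

open Finset Matrix

/-- The signless Laplacian matrix `Q(G) = D(G) + A(G)` of a graph. -/
noncomputable def signlessLaplacian {V : Type*} [Fintype V] [DecidableEq V]
    (G : SimpleGraph V) [DecidableRel G.Adj] : Matrix V V ℝ :=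
  Matrix.diagonal (fun v => (G.degree v : ℝ)) + G.adjMatrix ℝ

/-- The Q-index (largest eigenvalue of the signless Laplacian). -/
noncomputable def qIndex {V : Type*} [Fintype V] [DecidableEq V]
    (G : SimpleGraph V) [DecidableRel G.Adj] : ℝ :=
  sSup {μ : ℝ | ∃ x : V → ℝ, x ≠ 0 ∧ signlessLaplacian G *ᵥ x = μ • x}

/-- The adjacency spectral radius (largest eigenvalue of the adjacency matrix). -/
noncomputable def adjSpecRad {V : Type*} [Fintype V] [DecidableEq V]
    (G : SimpleGraph V) [DecidableRel G.Adj] : ℝ :=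
  sSup {μ : ℝ | ∃ x : V → ℝ, x ≠ 0 ∧ G.adjMatrix ℝ *ᵥ x = μ • x}

/-- A graph is `k`-path-coverable if its vertex set can be covered by at most `k`
vertex-disjoint paths. -/
def PathCoverable {V : Type*} (G : SimpleGraph V) (k : ℕ) : Prop :=
  ∃ (m : ℕ) (P : Fin m → Σ (u : V) (v : V), G.Walk u v),
    m ≤ k ∧
    (∀ i, (P i).2.2.IsPath) ∧
    (∀ v : V, ∃ i, v ∈ (P i).2.2.support) ∧
    (∀ i j, i ≠ j → ∀ v, v ∈ (P i).2.2.support → v ∉ (P j).2.2.support)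

/-- A graph is traceable if it has a Hamilton path. -/
def Traceable {V : Type*} (G : SimpleGraph V) : Prop :=
  ∃ (u v : V) (p : G.Walk u v), p.IsPath ∧ ∀ w, w ∈ p.support

/-- `B(n,k,δ) = K_δ ∨ (K_{n-2δ-k} ∪ complement K_{δ+k})`: the first `δ` vertices form the
dominating clique `Y`, the next `n-2δ-k` vertices form the clique `Z`, and the
last `δ+k` vertices form the independent set `X`. -/
def Bgraph (n k δ : ℕ) : SimpleGraph (Fin n) where
  Adj i j := i ≠ j ∧ ((i : ℕ) < δ ∨ (j : ℕ) < δ ∨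
      ((i : ℕ) < n - (δ + k) ∧ (j : ℕ) < n - (δ + k)))
  symm := by
    refine ⟨?_⟩
    rintro i j ⟨hne, h⟩
    exact ⟨hne.symm, by tauto⟩
  loopless := by
    refine ⟨?_⟩
    rintro i ⟨h, -⟩
    exact h rfl

instance (n k δ : ℕ) : DecidableRel (Bgraph n k δ).Adj := fun i j =>
  inferInstanceAs (Decidable (i ≠ j ∧ ((i : ℕ) < δ ∨ (j : ℕ) < δ ∨
      ((i : ℕ) < n - (δ + k) ∧ (j : ℕ) < n - (δ + k)))))

instance {n : ℕ} (G : SimpleGraph (Fin n)) [DecidableRel G.Adj]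
    (E' : Finset (Sym2 (Fin n))) : DecidableRel (G.deleteEdges ↑E').Adj := fun a b =>
  decidable_of_iff (G.Adj a b ∧ s(a, b) ∉ E') (by simp)

/-- The edge set `E₁` of `B(n,k,δ)`: edges with both endpoints in `Y ∪ Z`. -/
def IsE1Edge (n k δ : ℕ) (e : Sym2 (Fin n)) : Prop :=
  e ∈ (Bgraph n k δ).edgeSet ∧ ∀ v ∈ e, (v : ℕ) < n - (δ + k)

/-- The family `𝓑₁(n,k,δ)`, up to isomorphism. -/
def InB1 (n k δ : ℕ) (G : SimpleGraph (Fin n)) : Prop :=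
  ∃ E' : Finset (Sym2 (Fin n)),
    (∀ e ∈ E', IsE1Edge n k δ e) ∧ E'.card ≤ δ * (δ + k) / 4 ∧
    Nonempty (G ≃g (Bgraph n k δ).deleteEdges ↑E')

/-- The family `𝓑₂(n,k,δ)`, up to isomorphism. -/
def InB2 (n k δ : ℕ) (G : SimpleGraph (Fin n)) : Prop :=
  ∃ E' : Finset (Sym2 (Fin n)),
    (∀ e ∈ E', IsE1Edge n k δ e) ∧ E'.card = δ * (δ + k) / 4 + 1 ∧
    Nonempty (G ≃g (Bgraph n k δ).deleteEdges ↑E')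

/-! A vertex `v` outside a maximum clique of size `t` is nonadjacent to some clique vertex, whose
degree is at least `t - 1`; closedness therefore gives `d(v) ≤ n - k - t`. Together with `δ ≤ d(v)`
this is `t ≤ n - k - δ` as soon as the graph is not complete. If `t ≤ n - k - δ - 1`, there are too
few edges: for large `t`, because every edge outside the clique meets a vertex of small degree; for
small `t`, because the vertices of degree at least `(n - k) / 2` form a clique, so that at most `t`
vertices have such a large degree. -/

section PathCover

variable {V : Type*}

theorem traceable_top [Finite V] [Nonempty V] : Traceable (⊤ : SimpleGraph V) := by
  have := Fintype.ofFinite V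
  have hne : (univ : Finset V).toList ≠ [] := by
    simpa using univ_nonempty.ne_empty
  have hchain : (univ : Finset V).toList.IsChain (⊤ : SimpleGraph V).Adj :=
    (nodup_toList univ).isChain
  refine ⟨_, _, .ofSupport _ hne hchain, ?_, ?_⟩
  · simpa only [SimpleGraph.Walk.isPath_def, SimpleGraph.Walk.support_ofSupport]
      using nodup_toList univ
  · simp [SimpleGraph.Walk.support_ofSupport]

theorem Traceable.pathCoverable {G : SimpleGraph V} {k : ℕ} (hG : Traceable G) (hk : 1 ≤ k) :
    PathCoverable G k := by
  obtain ⟨u, v, p, hp, hcover⟩ := hG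
  exact ⟨1, fun _ => ⟨u, v, p⟩, hk, fun _ => hp, fun w => ⟨0, hcover w⟩,
    fun i j hij => absurd (Subsingleton.elim i j) hij⟩

theorem pathCoverable_top [Finite V] {k : ℕ} (hk : 1 ≤ k) :
    PathCoverable (⊤ : SimpleGraph V) k := by
  cases isEmpty_or_nonempty V
  · exact ⟨0, finZeroElim, k.zero_le, finZeroElim, isEmptyElim, finZeroElim⟩
  · exact traceable_top.pathCoverable hk

end PathCover

section EdgeCount

variable {V : Type*} {G : SimpleGraph V}

theorem card_le_degree_add_one_of_isClique {C : Finset V} (hC : G.IsClique C) {v : V} (hv : v ∈ C)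
    [Fintype (G.neighborSet v)] : #C ≤ G.degree v + 1 := by
  classical
  have hsub : C.erase v ⊆ G.neighborFinset v := fun w hw => by
    rw [mem_erase] at hw
    exact (G.mem_neighborFinset v w).2 (hC hv hw.2 hw.1.symm)
  have hcard := card_le_card hsub
  rw [card_erase_of_mem hv, G.card_neighborFinset_eq_degree] at hcard
  omega

theorem card_edgeFinset_le_choose_two_add_sum_degree_compl [Fintype V] [DecidableEq V]
    [DecidableRel G.Adj] (C : Finset V) :
    #G.edgeFinset ≤ (#C).choose 2 + ∑ v ∈ Cᶜ, G.degree v := by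
  have hcover :
      G.edgeFinset ⊆ C.offDiag.image Sym2.mk.uncurry ∪ Cᶜ.biUnion (G.incidenceFinset ·) := by
    intro e he
    induction e with | _ u v
    rw [SimpleGraph.mem_edgeFinset, SimpleGraph.mem_edgeSet] at he
    by_cases hu : u ∈ C
    · by_cases hv : v ∈ C
      · exact mem_union_left _ (mem_image.2 ⟨(u, v), mem_offDiag.2 ⟨hu, hv, he.ne⟩, rfl⟩)
      · exact mem_union_right _ (mem_biUnion.2 ⟨v, mem_compl.2 hv, by
          simpa [SimpleGraph.incidenceSet] using he⟩)
    · exact mem_union_right _ (mem_biUnion.2 ⟨u, mem_compl.2 hu, by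
        simpa [SimpleGraph.incidenceSet] using he⟩)
  calc #G.edgeFinset
      ≤ #(C.offDiag.image Sym2.mk.uncurry) + #(Cᶜ.biUnion (G.incidenceFinset ·)) :=
        (card_le_card hcover).trans (card_union_le _ _)
    _ ≤ (#C).choose 2 + ∑ v ∈ Cᶜ, #(G.incidenceFinset v) := by
        rw [Sym2.card_image_offDiag]
        gcongr
        exact card_biUnion_le
    _ = (#C).choose 2 + ∑ v ∈ Cᶜ, G.degree v := by
        simp only [SimpleGraph.card_incidenceFinset_eq_degree]

end EdgeCount

/-- A graph is `s`-closed, in the sense of Bondy and Chvátal, if any two distinct nonadjacent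
vertices have degree sum less than `s`; the `s`-closure of a graph is its smallest `s`-closed
supergraph. -/
def IsDegreeSumClosed {V : Type*} (G : SimpleGraph V) [G.LocallyFinite] (s : ℕ) : Prop :=
  ∀ u v : V, u ≠ v → ¬G.Adj u v → G.degree u + G.degree v < s

namespace IsDegreeSumClosed

variable {V : Type*} {G : SimpleGraph V} {s : ℕ}

theorem degree_add_card_le_of_maximal_isClique [G.LocallyFinite] (hG : IsDegreeSumClosed G s)
    {C : Finset V} (hC : Maximal G.IsClique (C : Set V)) {v : V} (hv : v ∉ C) :
    G.degree v + #C ≤ s := by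
  obtain ⟨u, hu, hvu, hadj⟩ : ∃ u ∈ C, v ≠ u ∧ ¬G.Adj v u := by
    by_contra! hcon
    exact hv (hC.2 (hC.prop.insert hcon) (Set.subset_insert v _) (Set.mem_insert v _))
  have hsum := hG v u hvu hadj
  have hclique := card_le_degree_add_one_of_isClique hC.prop hu
  omega

theorem isClique_setOf_le_two_mul_degree [G.LocallyFinite] (hG : IsDegreeSumClosed G s) :
    G.IsClique {v | s ≤ 2 * G.degree v} := by
  intro u hu v hv huv
  by_contra hadj
  have hsum := hG u v huv hadj
  simp only [Set.mem_ofPred_eq] at hu hv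
  omega

variable [Fintype V] [DecidableRel G.Adj]

theorem exists_degree_add_cliqueNum_le (hG : IsDegreeSumClosed G s) (hne : G ≠ ⊤) :
    ∃ v, G.degree v + G.cliqueNum ≤ s := by
  obtain ⟨C, hC⟩ := G.maximumClique_exists
  obtain ⟨v, hv⟩ : ∃ v, v ∉ C := by
    by_contra! hall
    refine hne (SimpleGraph.isClique_univ.1 ?_)
    simpa [eq_univ_of_forall hall] using hC.isClique
  rw [← G.maximumClique_card_eq_cliqueNum C hC]
  exact ⟨v, hG.degree_add_card_le_of_maximal_isClique (hC.isMaximalClique C) hv⟩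

theorem card_edgeFinset_le_choose_two_add (hG : IsDegreeSumClosed G s) :
    #G.edgeFinset ≤
      G.cliqueNum.choose 2 + (Fintype.card V - G.cliqueNum) * (s - G.cliqueNum) := by
  classical
  obtain ⟨C, hC⟩ := G.maximumClique_exists
  rw [← G.maximumClique_card_eq_cliqueNum C hC]
  have hdeg : ∀ v ∈ Cᶜ, G.degree v ≤ s - #C := fun v hv =>
    Nat.le_sub_of_add_le
      (hG.degree_add_card_le_of_maximal_isClique (hC.isMaximalClique C) (mem_compl.1 hv))
  calc #G.edgeFinset
      ≤ (#C).choose 2 + ∑ v ∈ Cᶜ, G.degree v :=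
        card_edgeFinset_le_choose_two_add_sum_degree_compl C
    _ ≤ (#C).choose 2 + (Fintype.card V - #C) * (s - #C) := by
        rw [← card_compl, ← smul_eq_mul]
        gcongr
        exact sum_le_card_nsmul _ _ _ hdeg

theorem four_mul_card_edgeFinset_le (hG : IsDegreeSumClosed G s) :
    4 * #G.edgeFinset ≤
      Fintype.card V * (s - 1) + G.cliqueNum * (2 * Fintype.card V - 1 - s) := by
  let K : Finset V := {v | s ≤ 2 * G.degree v}
  have hK : #K ≤ G.cliqueNum :=
    SimpleGraph.IsClique.card_le_cliqueNum
      (tc := by simpa [K] using hG.isClique_setOf_le_two_mul_degree)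
  have hdeg (v : V) :
      2 * G.degree v ≤ s - 1 + if s ≤ 2 * G.degree v then 2 * Fintype.card V - 1 - s else 0 := by
    have hlt := G.degree_lt_card_verts v
    split_ifs <;> omega
  calc 4 * #G.edgeFinset
      = ∑ v, 2 * G.degree v := by
        rw [← mul_sum, G.sum_degrees_eq_twice_card_edges]
        omega
    _ ≤ ∑ v, (s - 1 + if s ≤ 2 * G.degree v then 2 * Fintype.card V - 1 - s else 0) :=
        sum_le_sum fun v _ => hdeg v
    _ = Fintype.card V * (s - 1) + #K * (2 * Fintype.card V - 1 - s) := by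
        rw [sum_add_distrib, ← sum_filter]
        simp only [sum_const, smul_eq_mul, card_univ, K]
    _ ≤ Fintype.card V * (s - 1) + G.cliqueNum * (2 * Fintype.card V - 1 - s) := by
        gcongr

end IsDegreeSumClosed

section Threshold

variable {n k δ t : ℝ}

theorem large_clique_bound_le (ht : t + δ + k + 1 ≤ n) (hlarge : n + k + 3 * δ + 4 ≤ 3 * t) :
    t * (t - 1) / 2 + (n - t) * (n - k - t) ≤
      1 / 2 * (n - k - δ - 1) * (n - k - δ - 2) + (δ + k + 1) * (δ + 1) := by
  -- The two sides, quadratic in `t`, agree at `t = n - k - δ - 1` and at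
  -- `t = (n + k + 3 * δ + 4) / 3`.
  have hroots : 0 ≤ (n - (t + δ + k + 1)) * (3 * t - (n + k + 3 * δ + 4)) :=
    mul_nonneg (sub_nonneg.2 ht) (sub_nonneg.2 hlarge)
  linarith

theorem small_clique_bound_le (hk : 0 ≤ k) (hδ : 0 ≤ δ) (hn : 8 * δ + 6 * k + 7 ≤ n)
    (hsmall : 3 * t ≤ n + k + 3 * δ + 4) :
    n * (n - k - 1) + t * (n + k - 1) ≤
      4 * (1 / 2 * (n - k - δ - 1) * (n - k - δ - 2) + (δ + k + 1) * (δ + 1)) := by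
  have ht : 0 ≤ (n + k + 3 * δ + 4 - 3 * t) * (n + k - 1) :=
    mul_nonneg (by linarith) (by linarith)
  obtain ⟨m, hm, rfl⟩ : ∃ m, 0 ≤ m ∧ n = m + (8 * δ + 6 * k + 7) :=
    ⟨n - (8 * δ + 6 * k + 7), by linarith, by ring⟩
  -- Three times the gap at `t = (n + k + 3 * δ + 4) / 3`, expanded in `m`.
  have hgap : 0 ≤ 2 * m ^ 2 + m * (13 * k + 17 * δ + 10) +
      (11 * k ^ 2 + 35 * k * δ + 26 * δ ^ 2 + 10 * k + 20 * δ) := by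
    positivity
  linarith

end Threshold

theorem IsDegreeSumClosed.le_cliqueNum_add_of_lt_card_edgeFinset {V : Type*} [Fintype V]
    {G : SimpleGraph V} [DecidableRel G.Adj] {k δ n : ℕ} (hV : Fintype.card V = n)
    (hG : IsDegreeSumClosed G (n - k)) (hn : 8 * δ + 6 * k + 7 ≤ n)
    (he : (1 / 2 : ℝ) * ((n : ℝ) - k - δ - 1) * ((n : ℝ) - k - δ - 2)
        + ((δ : ℝ) + k + 1) * ((δ : ℝ) + 1) < (#G.edgeFinset : ℝ)) :
    n ≤ G.cliqueNum + δ + k := by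
  set t := G.cliqueNum
  by_contra! hlt
  have ht : (t : ℝ) + δ + k + 1 ≤ n := by exact_mod_cast hlt
  obtain hlarge | hsmall := le_total (n + k + 3 * δ + 4) (3 * t)
  · have hedges : (#G.edgeFinset : ℝ) ≤ t * (t - 1) / 2 + (n - t) * (n - k - t) := by
      have hcount : (#G.edgeFinset : ℝ) ≤ (t.choose 2 + (n - t) * (n - k - t) : ℕ) :=
        Nat.cast_le.2 (hV ▸ hG.card_edgeFinset_le_choose_two_add)
      rwa [Nat.cast_add, Nat.cast_choose_two, Nat.cast_mul, Nat.cast_sub (by omega),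
        Nat.cast_sub (by omega), Nat.cast_sub (by omega)] at hcount
    exact he.not_ge (hedges.trans (large_clique_bound_le ht (by exact_mod_cast hlarge)))
  · have hedges : 4 * (#G.edgeFinset : ℝ) ≤ n * (n - k - 1) + t * (n + k - 1) := by
      have hcount := hG.four_mul_card_edgeFinset_le
      rw [hV, show 2 * n - 1 - (n - k) = n + k - 1 by omega] at hcount
      have hcast : (4 * #G.edgeFinset : ℕ) ≤ ((n * (n - k - 1) + t * (n + k - 1) : ℕ) : ℝ) :=
        Nat.cast_le.2 hcount
      push_cast [Nat.cast_sub (show 1 ≤ n - k by omega), Nat.cast_sub (show k ≤ n by omega),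
        Nat.cast_sub (show 1 ≤ n + k by omega)] at hcast
      exact hcast
    have hbound := small_clique_bound_le (Nat.cast_nonneg k) (Nat.cast_nonneg δ)
      (by exact_mod_cast hn : 8 * (δ : ℝ) + 6 * k + 7 ≤ n) (t := t) (by exact_mod_cast hsmall)
    linarith

theorem closure_cliqueNum_general {V : Type*} [Fintype V] {k δ n : ℕ} (hV : Fintype.card V = n)
    (hn : 8 * δ + 6 * k + 7 ≤ n) {H : SimpleGraph V} [DecidableRel H.Adj]
    (hmin : ∀ v, δ ≤ H.degree v)
    (he : (1 / 2 : ℝ) * ((n : ℝ) - k - δ - 1) * ((n : ℝ) - k - δ - 2)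
        + ((δ : ℝ) + k + 1) * ((δ : ℝ) + 1) < (#H.edgeFinset : ℝ))
    (hclosed : IsDegreeSumClosed H (n - k)) (hne : H ≠ ⊤) :
    H.cliqueNum = n - δ - k := by
  obtain ⟨v, hupper⟩ := hclosed.exists_degree_add_cliqueNum_le hne
  have hlower := hclosed.le_cliqueNum_add_of_lt_card_edgeFinset hV hn he
  have hminv := hmin v
  omega

/-- The clique-number step in the proof of Lemma 3.1: if `H` is the `(n-k)`-closure of `G`
(characterized as the smallest supergraph of `G` in which nonadjacent vertices have degree
sum less than `n-k`) and `H` is not k-path-coverable, then `ω(H) = n - δ - k`. -/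
theorem closure_cliqueNum (k δ n : ℕ) (hk : 1 ≤ k) (hδ : 1 ≤ δ)
    (hn : 8 * δ + 6 * k + 7 ≤ n)
    (G H : SimpleGraph (Fin n)) [DecidableRel G.Adj] [DecidableRel H.Adj]
    (hmin : ∀ v, δ ≤ G.degree v)
    (he : (1 / 2 : ℝ) * ((n : ℝ) - k - δ - 1) * ((n : ℝ) - k - δ - 2)
        + ((δ : ℝ) + k + 1) * ((δ : ℝ) + 1) < (G.edgeFinset.card : ℝ))
    (hGH : G ≤ H)
    (hclosed : ∀ u v : Fin n, u ≠ v → ¬H.Adj u v → H.degree u + H.degree v < n - k)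
    (hsmallest : ∀ (H' : SimpleGraph (Fin n)) [DecidableRel H'.Adj], G ≤ H' →
        (∀ u v : Fin n, u ≠ v → ¬H'.Adj u v → H'.degree u + H'.degree v < n - k) →
        H ≤ H')
    (hnc : ¬PathCoverable H k) :
    H.cliqueNum = n - δ - k := by
  have hne : H ≠ ⊤ := by rintro rfl; exact hnc (pathCoverable_top hk)
  exact closure_cliqueNum_general (Fintype.card_fin n) hn
    (fun v => (hmin v).trans (SimpleGraph.degree_le_of_le hGH))
    (he.trans_le (mod_cast card_le_card (SimpleGraph.edgeFinset_mono hGH))) hclosed hne
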